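/- Let M be a finitely generated torsion module over R[t^{±1}] (R a Noetherian UFD) and let N ⊆ M be a submodule. Then the order of N divides the order of M. -/

import Mathlib

/-- `Δ` is the order (gcd of the maximal minors of a presentation matrix) of the
finitely generated module `M` over the commutative ring `A`. -/
def IsOrderOf {A : Type*} [CommRing A] (Δ : A)
    (M : Type*) [AddCommGroup M] [Module A M] : Prop :=
  ∃ (m n : ℕ) (F : Matrix (Fin n) (Fin m) A),
    Nonempty (((Fin n → A) ⧸ LinearMap.range (Matrix.toLin' F)) ≃ₗ[A] M) ∧
    (∀ e : Fin n ↪ Fin m, Δ ∣ (F.submatrix id ⇑e).det) ∧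
    (∀ d : A, (∀ e : Fin n ↪ Fin m, d ∣ (F.submatrix id ⇑e).det) → d ∣ Δ)

/-!
Over a discrete valuation ring, `d` divides all maximal minors of a matrix if and only if the
valuation of `d` is at most the length of the cokernel (with both sides possibly infinite), and
length is monotone under injections. Over a unique factorization domain, divisibility can be tested
on the powers of each prime `p`, hence after localizing at `(p)`: this yields a discrete valuation
ring, and by flatness an injection of cokernels stays injective. So every common divisor of the
maximal minors presenting `N` divides the maximal minors presenting `M`.
-/

open IsDiscreteValuationRing

/-- The module presented by `F`, with one generator per row and one relation per column. -/
abbrev MatrixCokernel {A m n : Type*} [CommRing A] [Fintype m] [DecidableEq m]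
    (F : Matrix n m A) : Type _ :=
  (n → A) ⧸ LinearMap.range (Matrix.toLin' F)

/-- `d` is a common divisor of the maximal minors of `F`, i.e. of the minors using all the rows.
Columns are selected by arbitrary embeddings, since reordering them only changes the sign. -/
def DvdMaximalMinors {A m n : Type*} [CommRing A] [Fintype n] [DecidableEq n]
    (d : A) (F : Matrix n m A) : Prop :=
  ∀ e : n ↪ m, d ∣ (F.submatrix id e).det

theorem range_toLin'_submatrix_le {A m m' n : Type*} [CommRing A] [Fintype m] [DecidableEq m]
    [Fintype m'] [DecidableEq m'] (F : Matrix n m A) (f : m' → m) :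
    LinearMap.range (Matrix.toLin' (F.submatrix id f)) ≤ LinearMap.range (Matrix.toLin' F) := by
  rw [Matrix.range_toLin', Matrix.range_toLin']
  exact Submodule.span_mono (Set.range_comp_subset_range f F.col)

theorem subsingleton_matrixCokernel_iff {A m n : Type*} [CommRing A] [Fintype m] [DecidableEq m]
    [Finite n] [DecidableEq n] {F : Matrix n m A} :
    Subsingleton (MatrixCokernel F) ↔ ∃ C : Matrix m n A, F * C = 1 := by
  rw [Submodule.Quotient.subsingleton_iff, LinearMap.range_eq_top,
    ← Matrix.mulVec_surjective_iff_exists_right_inverse]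
  rfl

section CommRing

variable {A m n : Type*} [CommRing A] [Fintype n] [DecidableEq n]

theorem det_mul_eq_sum_prod_mul_det_submatrix [Fintype m]
    (F : Matrix n m A) (C : Matrix m n A) :
    (F * C).det = ∑ f : n → m, (∏ i, C (f i) i) * (F.submatrix id f).det := by
  have rows_eq : (F * C).transpose = fun i => ∑ j, C j i • F.transpose j := by
    ext i j
    simp [Matrix.mul_apply, mul_comm]
  calc (F * C).det
      = Matrix.detRowAlternating.toMultilinearMap fun i => ∑ j, C j i • F.transpose j := by
        rw [← Matrix.det_transpose, rows_eq]; rfl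
    _ = ∑ f : n → m, Matrix.detRowAlternating.toMultilinearMap
          fun i => C (f i) i • F.transpose (f i) := MultilinearMap.map_sum _ _
    _ = ∑ f : n → m, (∏ i, C (f i) i) * (F.submatrix id f).det := by
        refine Finset.sum_congr rfl fun f _ => ?_
        rw [MultilinearMap.map_smul_univ, smul_eq_mul, ← Matrix.det_transpose (F.submatrix id f)]
        rfl

theorem DvdMaximalMinors.dvd_det_submatrix {F : Matrix n m A} {d : A}
    (hd : DvdMaximalMinors d F) (f : n → m) : d ∣ (F.submatrix id f).det := by
  by_cases hf : Function.Injective f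
  · exact hd ⟨f, hf⟩
  · obtain ⟨i, j, hij, hne⟩ := Function.not_injective_iff.1 hf
    rw [Matrix.det_zero_of_column_eq hne fun k => by simp [hij]]
    exact dvd_zero d

theorem DvdMaximalMinors.dvd_det_mul [Fintype m] {F : Matrix n m A} {d : A}
    (hd : DvdMaximalMinors d F) (C : Matrix m n A) : d ∣ (F * C).det := by
  rw [det_mul_eq_sum_prod_mul_det_submatrix]
  exact Finset.dvd_sum fun f _ => (hd.dvd_det_submatrix f).mul_left _

theorem DvdMaximalMinors.map {B : Type*} [CommRing B] {F : Matrix n m A} {d : A}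
    (hd : DvdMaximalMinors d F) (g : A →+* B) : DvdMaximalMinors (g d) (F.map g) := by
  intro e
  rw [Matrix.submatrix_map, ← RingHom.mapMatrix_apply, ← RingHom.map_det]
  exact map_dvd g (hd e)

theorem subsingleton_matrixCokernel_of_isUnit_det_submatrix [Fintype m] [DecidableEq m]
    {F : Matrix n m A} {f : n → m} (hf : IsUnit (F.submatrix id f).det) :
    Subsingleton (MatrixCokernel F) := by
  rw [Submodule.Quotient.subsingleton_iff, eq_top_iff]
  refine le_trans ?_ (range_toLin'_submatrix_le F f)
  rw [top_le_iff, LinearMap.range_eq_top]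
  exact Matrix.mulVec_surjective_iff_isUnit.2 ((Matrix.isUnit_iff_isUnit_det _).2 hf)

theorem DvdMaximalMinors.isUnit_of_subsingleton [Fintype m] [DecidableEq m] {F : Matrix n m A}
    {d : A} (hd : DvdMaximalMinors d F) (hF : Subsingleton (MatrixCokernel F)) : IsUnit d := by
  obtain ⟨C, hC⟩ := subsingleton_matrixCokernel_iff.1 hF
  exact isUnit_of_dvd_one (by simpa [hC] using hd.dvd_det_mul C)

end CommRing

section FiniteLength

variable {A M : Type*} [CommRing A] [IsDomain A] [AddCommGroup M] [Module A M]

theorem isTorsion_of_isArtinian (hA : ¬ IsField A) [IsArtinian A M] : Module.IsTorsion A M := by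
  intro x
  by_contra hx
  have injective_smul : Function.Injective (LinearMap.toSpanSingleton A M x) := by
    refine (injective_iff_map_eq_zero _).2 fun a ha => by_contra fun ha0 => hx ?_
    exact ⟨⟨a, mem_nonZeroDivisors_of_ne_zero ha0⟩, ha⟩
  have : IsArtinianRing A := isArtinian_of_injective _ injective_smul
  exact hA (IsArtinianRing.isField_of_isDomain A)

theorem finrank_eq_of_length_quotient_ne_top [Module.Finite A M] (hA : ¬ IsField A)
    {L : Submodule A M} (hL : Module.length A (M ⧸ L) ≠ ⊤) :
    Module.finrank A L = Module.finrank A M := by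
  obtain ⟨-, _⟩ := isFiniteLength_iff_isNoetherian_isArtinian.1 (Module.length_ne_top_iff.1 hL)
  have torsion : Module.IsTorsion A (M ⧸ L) := isTorsion_of_isArtinian hA
  rw [← L.finrank_quotient_add_finrank, Module.finrank_eq_zero_iff_isTorsion.2 torsion, zero_add]

end FiniteLength

theorem associated_det_prod_smithNormalFormCoeffs {A M ι : Type*} [CommRing A] [IsDomain A]
    [IsPrincipalIdealRing A] [AddCommGroup M] [Module A M] [Fintype ι]
    (b : Module.Basis ι A M) {f : M →ₗ[A] M} (hf : Function.Injective f)
    (h : Module.finrank A (LinearMap.range f) = Module.finrank A M) :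
    Associated (LinearMap.det f) (∏ i, Submodule.smithNormalFormCoeffs b h i) := by
  classical
  let a := Submodule.smithNormalFormCoeffs b h
  let top := Submodule.smithNormalFormTopBasis b h
  let bot := Submodule.smithNormalFormBotBasis b h
  let D := Matrix.toLin top top (Matrix.diagonal a)
  let rescale : LinearMap.range f ≃ₗ[A] M := bot.equiv top (Equiv.refl ι)
  have D_comp_rescale : D ∘ₗ rescale.toLinearMap = (LinearMap.range f).subtype := by
    refine bot.ext fun i => ?_
    simp [D, a, rescale, bot, top, Matrix.toLin_self, Matrix.diagonal_apply]
  have associated_det : Associated (LinearMap.det f) (LinearMap.det D) :=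
    LinearMap.associated_det_of_eq_comp ((LinearEquiv.ofInjective f hf).trans rescale) f D
      fun x => (LinearMap.congr_fun D_comp_rescale (LinearEquiv.ofInjective f hf x)).symm
  rwa [LinearMap.det_toLin, Matrix.det_diagonal] at associated_det

section DiscreteValuationRing

variable {A : Type*} [CommRing A] [IsDomain A] [IsDiscreteValuationRing A]

theorem addVal_prod {ι : Type*} (s : Finset ι) (a : ι → A) :
    addVal A (∏ i ∈ s, a i) = ∑ i ∈ s, addVal A (a i) := by
  classical
  induction s using Finset.induction_on with
  | empty => simp
  | insert i s hi ih => rw [Finset.prod_insert hi, Finset.sum_insert hi, addVal_mul, ih]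

theorem length_quotient_range_eq_addVal_det {M : Type*} [AddCommGroup M] [Module A M]
    [Module.Finite A M] [Module.Free A M] {f : M →ₗ[A] M} (hf : Function.Injective f) :
    Module.length A (M ⧸ LinearMap.range f) = addVal A (LinearMap.det f) := by
  have h := LinearMap.finrank_range_of_inj hf
  let b := Module.Free.chooseBasis A M
  rw [(Submodule.quotientEquivPiSpan _ b h).length_eq, Module.length_pi_of_fintype,
    (addVal_eq_iff_associated _ _).2 (associated_det_prod_smithNormalFormCoeffs b hf h),
    addVal_prod]
  exact Finset.sum_congr rfl fun i _ => Ring.ord_eq_addVal _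

variable {m n : Type*} [Fintype m] [DecidableEq m] [Fintype n] [DecidableEq n]

theorem length_matrixCokernel_le_addVal_det_submatrix (F : Matrix n m A) (f : n → m) :
    Module.length A (MatrixCokernel F) ≤ addVal A (F.submatrix id f).det := by
  by_cases h0 : (F.submatrix id f).det = 0
  · simp [h0]
  have h := range_toLin'_submatrix_le F f
  calc Module.length A (MatrixCokernel F)
      ≤ Module.length A (MatrixCokernel (F.submatrix id f)) :=
        Module.length_le_of_surjective _ (Submodule.factor_surjective h)
    _ = addVal A (F.submatrix id f).det := by
        rw [length_quotient_range_eq_addVal_det (Matrix.mulVec_injective_of_det_ne_zero h0),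
          LinearMap.det_toLin']

/- A quotient of finite length has full rank, so the columns of `F` span the image of an injective
endomorphism; that endomorphism factors through `F`. -/
theorem DvdMaximalMinors.addVal_le_length {F : Matrix n m A} {d : A} (hd : DvdMaximalMinors d F) :
    addVal A d ≤ Module.length A (MatrixCokernel F) := by
  by_cases hF : Module.length A (MatrixCokernel F) = ⊤
  · exact hF ▸ le_top
  let L := LinearMap.range (Matrix.toLin' F)
  have finrank_L : Module.finrank A L = Module.finrank A (n → A) :=
    finrank_eq_of_length_quotient_ne_top (not_isField A) hF
  let e : (n → A) ≃ₗ[A] L := (LinearEquiv.ofFinrankEq _ _ finrank_L).symm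
  let f : (n → A) →ₗ[A] (n → A) := L.subtype ∘ₗ e.toLinearMap
  have range_f : LinearMap.range f = L := by
    rw [LinearMap.range_comp, LinearEquiv.range, Submodule.map_top, Submodule.range_subtype]
  obtain ⟨c, hc⟩ := Module.projective_lifting_property (Matrix.toLin' F).rangeRestrict
    e.toLinearMap (Matrix.toLin' F).surjective_rangeRestrict
  have f_eq : f = Matrix.toLin' (F * LinearMap.toMatrix' c) := by
    rw [Matrix.toLin'_mul, Matrix.toLin'_toMatrix']
    exact congrArg (L.subtype ∘ₗ ·) hc.symm
  have dvd_det : d ∣ LinearMap.det f := by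
    rw [f_eq, LinearMap.det_toLin']
    exact hd.dvd_det_mul _
  rw [← addVal_le_iff_dvd, ← length_quotient_range_eq_addVal_det
    (L.injective_subtype.comp e.injective), range_f] at dvd_det
  exact dvd_det

theorem dvdMaximalMinors_iff_addVal_le_length {F : Matrix n m A} {d : A} :
    DvdMaximalMinors d F ↔ addVal A d ≤ Module.length A (MatrixCokernel F) :=
  ⟨fun hd => hd.addVal_le_length, fun hd e => addVal_le_iff_dvd.1
    (hd.trans (length_matrixCokernel_le_addVal_det_submatrix F e))⟩

theorem DvdMaximalMinors.of_injective_of_isDiscreteValuationRing {m' n' : Type*} [Fintype m']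
    [DecidableEq m'] [Fintype n'] [DecidableEq n'] {F : Matrix n m A} {F' : Matrix n' m' A} {d : A}
    (hd : DvdMaximalMinors d F') {φ : MatrixCokernel F' →ₗ[A] MatrixCokernel F}
    (hφ : Function.Injective φ) : DvdMaximalMinors d F :=
  dvdMaximalMinors_iff_addVal_le_length.2
    (hd.addVal_le_length.trans (Module.length_le_of_injective φ hφ))

end DiscreteValuationRing

section Localization

variable {A B : Type*} [CommRing A] [CommRing B] [Algebra A B]

theorem localized'_range_toLin' (S : Submonoid A) [IsLocalization S B]
    {m n : Type*} [Fintype m] [DecidableEq m] [Finite n] (F : Matrix n m A) :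
    (LinearMap.range (Matrix.toLin' F)).localized' B S
        (.pi fun i : n => Algebra.linearMap A B ∘ₗ .proj (φ := fun _ => A) i) =
      LinearMap.range (Matrix.toLin' (F.map (algebraMap A B))) := by
  rw [Matrix.range_toLin', Matrix.range_toLin', Submodule.localized'_span, ← Set.range_comp]
  rfl

theorem exists_injective_matrixCokernel_map (S : Submonoid A) [IsLocalization S B]
    {m n m' n' : Type*} [Fintype m] [DecidableEq m] [Finite n] [Fintype m'] [DecidableEq m']
    [Finite n'] {F : Matrix n m A} {F' : Matrix n' m' A}
    {φ : MatrixCokernel F' →ₗ[A] MatrixCokernel F} (hφ : Function.Injective φ) :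
    ∃ ψ : MatrixCokernel (F'.map (algebraMap A B)) →ₗ[B] MatrixCokernel (F.map (algebraMap A B)),
      Function.Injective ψ := by
  unfold MatrixCokernel
  rw [← localized'_range_toLin' S F, ← localized'_range_toLin' S F']
  exact ⟨IsLocalizedModule.mapExtendScalars S (Submodule.toLocalizedQuotient' B S _ _)
    (Submodule.toLocalizedQuotient' B S _ _) B φ, IsLocalizedModule.map_injective S _ _ φ hφ⟩

variable [IsDomain A] {p : A} [(Ideal.span {p}).IsPrime] [IsLocalization.AtPrime B (Ideal.span {p})]

theorem pow_dvd_of_algebraMap_pow_dvd_algebraMap (hp : p ≠ 0) {k : ℕ} {a : A}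
    (h : algebraMap A B p ^ k ∣ algebraMap A B a) : p ^ k ∣ a := by
  have prime_p : Prime p := (Ideal.span_singleton_prime hp).1 inferInstance
  have injective_algebraMap : Function.Injective (algebraMap A B) :=
    IsLocalization.injective B (Ideal.primeCompl_le_nonZeroDivisors (Ideal.span {p}))
  rw [← map_pow, ← Ideal.mem_span_singleton, ← Set.image_singleton, ← Ideal.map_span,
    IsLocalization.mem_map_algebraMap_iff (Ideal.span {p}).primeCompl] at h
  obtain ⟨⟨⟨c, hc⟩, s⟩, hcs⟩ := h
  have mul_eq : a * s = c := injective_algebraMap (by rw [map_mul, hcs])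
  have not_dvd : ¬ p ∣ (s : A) := fun hs => s.2 (Ideal.mem_span_singleton.2 hs)
  exact prime_p.pow_dvd_of_dvd_mul_right k not_dvd (mul_eq ▸ Ideal.mem_span_singleton.1 hc)

theorem isDiscreteValuationRing_of_isLocalization_atPrime_span_singleton [IsDomain B]
    [UniqueFactorizationMonoid A] (hp : p ≠ 0) : IsDiscreteValuationRing B := by
  have : IsLocalRing B := IsLocalization.AtPrime.isLocalRing B (Ideal.span {p})
  have : UniqueFactorizationMonoid B :=
    UniqueFactorizationMonoid.of_isLocalization (Ideal.span {p}).primeCompl B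
  have maximalIdeal_eq : IsLocalRing.maximalIdeal B = Ideal.span {algebraMap A B p} := by
    rw [← IsLocalization.AtPrime.map_eq_maximalIdeal (Ideal.span {p}) B, Ideal.map_span,
      Set.image_singleton]
  have algebraMap_p_ne_zero : algebraMap A B p ≠ 0 :=
    IsLocalization.to_map_ne_zero_of_mem_nonZeroDivisors B
      (Ideal.primeCompl_le_nonZeroDivisors (Ideal.span {p})) (mem_nonZeroDivisors_of_ne_zero hp)
  have prime_algebraMap_p : Prime (algebraMap A B p) := by
    rw [← Ideal.span_singleton_prime algebraMap_p_ne_zero, ← maximalIdeal_eq]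
    infer_instance
  have associated_p {q : B} (hq : Irreducible q) : Associated (algebraMap A B p) q := by
    rw [← prime_algebraMap_p.irreducible.dvd_irreducible_iff_associated hq,
      ← Ideal.mem_span_singleton, ← maximalIdeal_eq]
    exact hq.not_isUnit
  exact of_ufd_of_unique_irreducible ⟨_, prime_algebraMap_p.irreducible⟩
    fun _ _ hq hr => (associated_p hq).symm.trans (associated_p hr)

end Localization

section UniqueFactorizationMonoid

variable {A : Type*} [CommRing A] [IsDomain A] [UniqueFactorizationMonoid A]

theorem dvd_of_forall_prime_pow_dvd {a b : A} (hunit : IsUnit b → IsUnit a)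
    (hpow : ∀ p : A, Prime p → ∀ k : ℕ, p ^ k ∣ a → p ^ k ∣ b) : a ∣ b := by
  by_cases hb0 : b = 0
  · exact hb0 ▸ dvd_zero a
  by_cases hb : IsUnit b
  · exact (hunit hb).dvd
  have ha0 : a ≠ 0 := by
    rintro rfl
    obtain ⟨p, hp, -⟩ := WfDvdMonoid.exists_irreducible_factor hb hb0
    obtain ⟨k, hk⟩ := FiniteMultiplicity.of_prime_left hp.prime hb0
    exact hk (hpow p hp.prime _ (dvd_zero _))
  rw [UniqueFactorizationMonoid.dvd_iff_emultiplicity_le ha0]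
  exact fun p hp => emultiplicity_le_emultiplicity_iff.2 (hpow p hp)

variable {m n m' n' : Type*} [Fintype m] [DecidableEq m] [Fintype n] [DecidableEq n]
  [Fintype m'] [DecidableEq m'] [Fintype n'] [DecidableEq n']

theorem DvdMaximalMinors.prime_pow_of_injective {F : Matrix n m A} {F' : Matrix n' m' A}
    {p : A} (hp : Prime p) {k : ℕ} (hd : DvdMaximalMinors (p ^ k) F')
    {φ : MatrixCokernel F' →ₗ[A] MatrixCokernel F} (hφ : Function.Injective φ) :
    DvdMaximalMinors (p ^ k) F := by
  have : (Ideal.span {p}).IsPrime := (Ideal.span_singleton_prime hp.ne_zero).2 hp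
  let B := Localization.AtPrime (Ideal.span {p})
  have : IsDiscreteValuationRing B :=
    isDiscreteValuationRing_of_isLocalization_atPrime_span_singleton hp.ne_zero
  obtain ⟨ψ, hψ⟩ := exists_injective_matrixCokernel_map (B := B) (Ideal.span {p}).primeCompl hφ
  intro e
  refine pow_dvd_of_algebraMap_pow_dvd_algebraMap (B := B) hp.ne_zero ?_
  rw [← map_pow, RingHom.map_det, RingHom.mapMatrix_apply, ← Matrix.submatrix_map]
  exact (hd.map (algebraMap A B)).of_injective_of_isDiscreteValuationRing hψ e

theorem DvdMaximalMinors.of_injective {F : Matrix n m A} {F' : Matrix n' m' A} {d : A}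
    (hd : DvdMaximalMinors d F') {φ : MatrixCokernel F' →ₗ[A] MatrixCokernel F}
    (hφ : Function.Injective φ) : DvdMaximalMinors d F := by
  refine fun e => dvd_of_forall_prime_pow_dvd (fun hu => ?_) fun p hp k hk => ?_
  · have := subsingleton_matrixCokernel_of_isUnit_det_submatrix hu
    exact hd.isUnit_of_subsingleton hφ.subsingleton
  · have hpow : DvdMaximalMinors (p ^ k) F' := fun e' => hk.trans (hd e')
    exact hpow.prime_pow_of_injective hp hφ e

end UniqueFactorizationMonoid

theorem stmt_12_general {A M N : Type*} [CommRing A] [IsDomain A] [UniqueFactorizationMonoid A]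
    [AddCommGroup M] [Module A M] [AddCommGroup N] [Module A N]
    {f : N →ₗ[A] M} (hf : Function.Injective f) {ΔN ΔM : A}
    (hN : IsOrderOf ΔN N) (hM : IsOrderOf ΔM M) : ΔN ∣ ΔM := by
  obtain ⟨_, _, F', ⟨eN⟩, hd, -⟩ := hN
  obtain ⟨_, _, F, ⟨eM⟩, -, greatest⟩ := hM
  let φ : MatrixCokernel F' →ₗ[A] MatrixCokernel F := eM.symm.toLinearMap ∘ₗ f ∘ₗ eN.toLinearMap
  have hφ : Function.Injective φ := eM.symm.injective.comp (hf.comp eN.injective)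
  exact greatest ΔN (DvdMaximalMinors.of_injective hd hφ)

/-- If `N` is a submodule of a finitely generated torsion module `M` over
`R[t^{±1}]`, `R` a Noetherian UFD, then the order of `N` divides the order of `M`. -/
theorem stmt_12 {R : Type*} [CommRing R] [IsDomain R] [IsNoetherianRing R]
    [UniqueFactorizationMonoid R]
    (M : Type*) [AddCommGroup M] [Module (LaurentPolynomial R) M]
    [Module.Finite (LaurentPolynomial R) M]
    (htor : Module.IsTorsion (LaurentPolynomial R) M)
    (N : Submodule (LaurentPolynomial R) M)
    (ΔN ΔM : LaurentPolynomial R)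
    (hN : IsOrderOf ΔN N) (hM : IsOrderOf ΔM M) :
    ΔN ∣ ΔM := by
  have : UniqueFactorizationMonoid (LaurentPolynomial R) :=
    UniqueFactorizationMonoid.of_isLocalization (Submonoid.powers (Polynomial.X : Polynomial R)) _
  exact stmt_12_general N.injective_subtype hN hM
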